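/- The function f(r) = (2/π)·𝒦(r)·𝒦'(r) + log r − μ(r') is strictly decreasing on (0,1); moreover f(r) → log 4 as r → 0⁺ and f(r) → 0 as r → 1⁻, so f maps (0,1) onto (0, log 4). -/

import Mathlib

open Set Filter

/-- Complete elliptic integral of the first kind. -/
noncomputable def ellK (r : ℝ) : ℝ :=
  ∫ θ in (0:ℝ)..(Real.pi / 2), (1 - r ^ 2 * Real.sin θ ^ 2) ^ (-(1/2) : ℝ)

/-- The Grötzsch modulus μ(r) = (π/2)·𝒦'(r)/𝒦(r). -/
noncomputable def mu (r : ℝ) : ℝ :=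
  Real.pi / 2 * ellK (Real.sqrt (1 - r ^ 2)) / ellK r

/-!
In the parameter `m = r²` the function is
`F m = (2 / π) K(m) K(1 - m) + (log m) / 2 - (π / 2) K(m) / K(1 - m)`. Besides `K` we use the
integral `B(m) = ∫ cos² θ / Δ(θ) dθ`, for which `dK/dm = B / (2 (1 - m))` and
`d(m B)/dm = K / 2`. Legendre's relation eliminates `K(m) B(1 - m)` from `F'`, leaving
`(1 - m) F'(m) = B(m) / M - (1 + M² / m) / 2`, where `M = π / (2 K(1 - m))` is the
arithmetic-geometric mean of `1` and `√m`. This is negative since `B ≤ 1` and `M² ≥ √m`.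

At the endpoints, `K(m) + log (1 - m) / 2 → log 4` as `m → 1`, and any function which is
differentiable and vanishes at the singular point cancels the logarithmic singularity of `K`.
-/

open Real Topology intervalIntegral
open MeasureTheory (volume)

section StrictAntiOn

variable {α β : Type*} [ConditionallyCompleteLinearOrder α] [TopologicalSpace α] [OrderTopology α]
  [DenselyOrdered α] [LinearOrder β] [TopologicalSpace β] [OrderClosedTopology β]
  {f : α → β} {a b x : α} {l u : β}

lemma lt_of_strictAntiOn_of_tendsto_nhdsGT (hf : StrictAntiOn f (Ioo a b))
    (hu : Tendsto f (𝓝[>] a) (𝓝 u)) (hx : x ∈ Ioo a b) : f x < u := by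
  obtain ⟨y, hay, hyx⟩ := exists_between hx.1
  have hy : y ∈ Ioo a b := ⟨hay, hyx.trans hx.2⟩
  have : (𝓝[>] a).NeBot := nhdsGT_neBot_of_exists_gt ⟨x, hx.1⟩
  refine (hf hy hx hyx).trans_le (ge_of_tendsto hu ?_)
  filter_upwards [Ioo_mem_nhdsGT hay] with z hz
  exact (hf ⟨hz.1, hz.2.trans hy.2⟩ hy hz.2).le

lemma lt_of_strictAntiOn_of_tendsto_nhdsLT (hf : StrictAntiOn f (Ioo a b))
    (hl : Tendsto f (𝓝[<] b) (𝓝 l)) (hx : x ∈ Ioo a b) : l < f x := by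
  obtain ⟨y, hxy, hyb⟩ := exists_between hx.2
  have hy : y ∈ Ioo a b := ⟨hx.1.trans hxy, hyb⟩
  have : (𝓝[<] b).NeBot := nhdsLT_neBot_of_exists_lt ⟨x, hx.2⟩
  refine (le_of_tendsto hl ?_).trans_lt (hf hx hy hxy)
  filter_upwards [Ioo_mem_nhdsLT hyb] with z hz
  exact (hf hy ⟨hy.1.trans hz.1, hz.2⟩ hz.1).le

lemma image_Ioo_of_strictAntiOn_of_tendsto (hab : a < b) (hf : StrictAntiOn f (Ioo a b))
    (hc : ContinuousOn f (Ioo a b)) (hu : Tendsto f (𝓝[>] a) (𝓝 u))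
    (hl : Tendsto f (𝓝[<] b) (𝓝 l)) : f '' Ioo a b = Ioo l u := by
  have : (𝓝[>] a).NeBot := nhdsGT_neBot_of_exists_gt ⟨b, hab⟩
  have : (𝓝[<] b).NeBot := nhdsLT_neBot_of_exists_lt ⟨a, hab⟩
  refine Subset.antisymm ?_ (isPreconnected_Ioo.intermediate_value_Ioo
    (le_principal_iff.2 (Ioo_mem_nhdsLT hab)) (le_principal_iff.2 (Ioo_mem_nhdsGT hab)) hc hl hu)
  rintro _ ⟨x, hx, rfl⟩
  exact ⟨lt_of_strictAntiOn_of_tendsto_nhdsLT hf hl hx,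
    lt_of_strictAntiOn_of_tendsto_nhdsGT hf hu hx⟩

end StrictAntiOn

lemma tendsto_mul_log_sub_of_hasDerivAt {g : ℝ → ℝ} {g' a : ℝ} (hg : HasDerivAt g g' a)
    (hga : g a = 0) : Tendsto (fun x => g x * log (x - a)) (𝓝[≠] a) (𝓝 0) := by
  have hlog : Tendsto (fun x => (x - a) * log (x - a)) (𝓝[≠] a) (𝓝 0) := by
    have h : Continuous fun x : ℝ => (x - a) * log (x - a) :=
      continuous_mul_log.comp (continuous_sub_right a)
    simpa using (h.tendsto a).mono_left nhdsWithin_le_nhds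
  rw [← mul_zero g']
  refine (hg.tendsto_slope.mul hlog).congr' ?_
  filter_upwards [self_mem_nhdsWithin] with x hx
  have : x - a ≠ 0 := sub_ne_zero.2 hx
  rw [slope_def_field, hga, sub_zero]
  field_simp

lemma hasDerivAt_arctan_div {f g : ℝ → ℝ} {f' g' x : ℝ} (hf : HasDerivAt f f' x)
    (hg : HasDerivAt g g' x) (hx : g x ≠ 0) :
    HasDerivAt (fun y => arctan (f y / g y)) ((f' * g x - f x * g') / (f x ^ 2 + g x ^ 2)) x := by
  refine (hf.div hg hx).arctan.congr_deriv ?_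
  have : f x ^ 2 + g x ^ 2 ≠ 0 := by positivity
  simp only [Pi.div_apply]
  field_simp
  ring

lemma tendsto_one_sub_nhdsLT_one : Tendsto (fun x : ℝ => 1 - x) (𝓝[<] 1) (𝓝[>] 0) := by
  have h : ContinuousWithinAt (fun x : ℝ => 1 - x) (Iio 1) 1 := by fun_prop
  simpa using h.tendsto_nhdsWithin (t := Ioi 0) fun x hx => sub_pos.2 hx

lemma tendsto_one_sub_nhdsGT_zero : Tendsto (fun x : ℝ => 1 - x) (𝓝[>] 0) (𝓝[<] 1) := by
  have h : ContinuousWithinAt (fun x : ℝ => 1 - x) (Ioi 0) 0 := by fun_prop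
  simpa using h.tendsto_nhdsWithin (t := Iio 1) fun x hx => sub_lt_self 1 hx

lemma cos_nonneg_of_mem_Icc_zero_pi_div_two {θ : ℝ} (hθ : θ ∈ Icc 0 (π / 2)) : 0 ≤ cos θ :=
  cos_nonneg_of_mem_Icc ⟨by linarith [hθ.1, pi_pos], hθ.2⟩

lemma cos_sq_add_mul_sin_sq_pos {a : ℝ} (ha : 0 < a) (θ : ℝ) :
    0 < cos θ ^ 2 + a * sin θ ^ 2 := by
  rcases eq_or_ne (sin θ) 0 with hs | hs
  · simp [hs, cos_sq']
  · positivity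

/- The antiderivative is `arctan (a * tan θ)`, rewritten as `θ + arctan (a * tan θ) - θ` with the
difference of arctangents combined, which makes it smooth across `π / 2`. -/
lemma integral_inv_cos_sq_add_sq_mul_sin_sq {a : ℝ} (ha : 0 < a) :
    ∫ θ in (0:ℝ)..(π / 2), (cos θ ^ 2 + a ^ 2 * sin θ ^ 2)⁻¹ = π / (2 * a) := by
  have hD (θ : ℝ) := cos_sq_add_mul_sin_sq_pos ha θ
  have hD2 (θ : ℝ) := cos_sq_add_mul_sin_sq_pos (pow_pos ha 2) θ
  have hderiv (θ : ℝ) : HasDerivAt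
      (fun θ => (θ + arctan ((a - 1) * (sin θ * cos θ) / (cos θ ^ 2 + a * sin θ ^ 2))) / a)
      (cos θ ^ 2 + a ^ 2 * sin θ ^ 2)⁻¹ θ := by
    have hnum := ((hasDerivAt_sin θ).mul (hasDerivAt_cos θ)).const_mul (a - 1)
    have hden := ((hasDerivAt_cos θ).pow 2).add (((hasDerivAt_sin θ).pow 2).const_mul a)
    refine (((hasDerivAt_id θ).add
      (hasDerivAt_arctan_div hnum hden (hD θ).ne')).div_const a).congr_deriv ?_
    have hsum : ((a - 1) * (sin θ * cos θ)) ^ 2 + (cos θ ^ 2 + a * sin θ ^ 2) ^ 2 =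
        cos θ ^ 2 + a ^ 2 * sin θ ^ 2 := by
      linear_combination (cos θ ^ 2 + a ^ 2 * sin θ ^ 2) * sin_sq_add_cos_sq θ
    have hne := (hD2 θ).ne'
    simp only [Pi.mul_apply, Pi.add_apply, Pi.pow_apply, hsum]
    field_simp
    push_cast
    linear_combination ((a - 1) * (cos θ ^ 2 - a * sin θ ^ 2) + a) * sin_sq_add_cos_sq θ
  rw [integral_eq_sub_of_hasDerivAt (fun θ _ => hderiv θ)]
  · simp only [cos_pi_div_two, sin_zero, mul_zero, zero_mul, zero_div, arctan_zero, add_zero,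
      sub_zero]
    field_simp
  · exact (Continuous.inv₀ (by fun_prop) fun θ => (hD2 θ).ne').intervalIntegrable _ _

section EllipticDelta

variable {m n : ℝ}

/-- Legendre's `Δ(θ) = √(1 - m sin² θ)`, as a function of the parameter `m = r²` rather than of the
modulus `r`. -/
noncomputable def ellipticDelta (m θ : ℝ) : ℝ := √(1 - m * sin θ ^ 2)

lemma one_sub_mul_sin_sq_pos (hm : m < 1) (θ : ℝ) : 0 < 1 - m * sin θ ^ 2 := by
  have := cos_sq_add_mul_sin_sq_pos (sub_pos.2 hm) θ
  linarith [sin_sq_add_cos_sq θ]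

lemma ellipticDelta_pos (hm : m < 1) (θ : ℝ) : 0 < ellipticDelta m θ :=
  sqrt_pos.2 (one_sub_mul_sin_sq_pos hm θ)

lemma ellipticDelta_sq (hm : m < 1) (θ : ℝ) : ellipticDelta m θ ^ 2 = 1 - m * sin θ ^ 2 :=
  sq_sqrt (one_sub_mul_sin_sq_pos hm θ).le

lemma ellipticDelta_zero (θ : ℝ) : ellipticDelta 0 θ = 1 := by simp [ellipticDelta]

lemma ellipticDelta_one (θ : ℝ) : ellipticDelta 1 θ = |cos θ| := by
  rw [ellipticDelta, one_mul, ← cos_sq', sqrt_sq_eq_abs]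

lemma ellipticDelta_le_ellipticDelta (h : m ≤ n) (θ : ℝ) :
    ellipticDelta n θ ≤ ellipticDelta m θ :=
  sqrt_le_sqrt (by gcongr)

lemma cos_le_ellipticDelta (hm : m ≤ 1) (θ : ℝ) : cos θ ≤ ellipticDelta m θ :=
  (le_abs_self _).trans <| ellipticDelta_one θ ▸ ellipticDelta_le_ellipticDelta hm θ

lemma cos_sq_add_sq_mul_sin_sq_le_ellipticDelta (a θ : ℝ) :
    cos θ ^ 2 + a ^ 2 * sin θ ^ 2 ≤ ellipticDelta (1 - a ^ 4) θ := by
  apply le_sqrt_of_sq_le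
  have hdiff : 1 - (1 - a ^ 4) * sin θ ^ 2 - (cos θ ^ 2 + a ^ 2 * sin θ ^ 2) ^ 2 =
      ((1 - a ^ 2) * (sin θ * cos θ)) ^ 2 := by
    rw [mul_pow, mul_pow, cos_sq']
    ring
  linarith [sq_nonneg ((1 - a ^ 2) * (sin θ * cos θ))]

lemma continuous_ellipticDelta (m : ℝ) : Continuous (ellipticDelta m) := by
  unfold ellipticDelta
  fun_prop

lemma continuous_ellipticDelta_left (θ : ℝ) : Continuous fun m => ellipticDelta m θ := by
  unfold ellipticDelta
  fun_prop

lemma hasDerivAt_ellipticDelta (hm : m < 1) (θ : ℝ) :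
    HasDerivAt (ellipticDelta m) (-(m * (sin θ * cos θ)) / ellipticDelta m θ) θ := by
  have h := (((hasDerivAt_sin θ).pow 2).const_mul m).const_sub 1
  refine (h.sqrt (one_sub_mul_sin_sq_pos hm θ).ne').congr_deriv ?_
  rw [ellipticDelta, Pi.pow_apply]
  field_simp
  ring

lemma hasDerivAt_ellipticDelta_left (hm : m < 1) (θ : ℝ) :
    HasDerivAt (fun x => ellipticDelta x θ) (-(sin θ ^ 2) / (2 * ellipticDelta m θ)) m := by
  have h := ((hasDerivAt_id m).mul_const (sin θ ^ 2)).const_sub 1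
  simpa [ellipticDelta] using h.sqrt (one_sub_mul_sin_sq_pos hm θ).ne'

end EllipticDelta

section EllipticInt

variable {w : ℝ → ℝ} {m : ℝ}

/-- The complete elliptic integral `∫₀^{π/2} w(θ) / Δ(θ) dθ` with weight `w` and parameter `m`. -/
noncomputable def ellipticInt (w : ℝ → ℝ) (m : ℝ) : ℝ :=
  ∫ θ in (0:ℝ)..(π / 2), w θ / ellipticDelta m θ

lemma intervalIntegrable_div_ellipticDelta_pow (hw : Continuous w) (hm : m < 1) (k : ℕ)
    (a b : ℝ) : IntervalIntegrable (fun θ => w θ / ellipticDelta m θ ^ k) volume a b :=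
  (hw.div ((continuous_ellipticDelta m).pow k)
    fun θ => (pow_pos (ellipticDelta_pos hm θ) k).ne').intervalIntegrable a b

lemma intervalIntegrable_div_ellipticDelta (hw : Continuous w) (hm : m < 1) (a b : ℝ) :
    IntervalIntegrable (fun θ => w θ / ellipticDelta m θ) volume a b := by
  simpa using intervalIntegrable_div_ellipticDelta_pow hw hm 1 a b

lemma ellipticInt_add {v : ℝ → ℝ} (hv : Continuous v) (hw : Continuous w) (hm : m < 1) :
    ellipticInt (fun θ => v θ + w θ) m = ellipticInt v m + ellipticInt w m := by
  simp only [ellipticInt, add_div]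
  exact integral_add (intervalIntegrable_div_ellipticDelta hv hm _ _)
    (intervalIntegrable_div_ellipticDelta hw hm _ _)

lemma ellipticInt_const_mul (c : ℝ) (w : ℝ → ℝ) (m : ℝ) :
    ellipticInt (fun θ => c * w θ) m = c * ellipticInt w m := by
  simp only [ellipticInt, mul_div_assoc, intervalIntegral.integral_const_mul]

lemma hasDerivAt_ellipticInt (hw : Continuous w) (hm : m < 1) :
    HasDerivAt (ellipticInt w)
      (∫ θ in (0:ℝ)..(π / 2), w θ * sin θ ^ 2 / 2 / ellipticDelta m θ ^ 3) m := by
  obtain ⟨q, hmq, hq⟩ := exists_between hm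
  have hw' : Continuous fun θ => w θ * sin θ ^ 2 / 2 := by fun_prop
  refine (intervalIntegral.hasDerivAt_integral_of_dominated_loc_of_deriv_le
    (bound := fun θ => |w θ * sin θ ^ 2 / 2| / ellipticDelta q θ ^ 3)
    (F := fun x θ => w θ / ellipticDelta x θ)
    (F' := fun x θ => w θ * sin θ ^ 2 / 2 / ellipticDelta x θ ^ 3)
    (Iio_mem_nhds hmq) ?_ ?_ ?_ ?_ ?_ ?_).2
  · exact .of_forall fun x =>
      (hw.measurable.div (continuous_ellipticDelta x).measurable).aestronglyMeasurable
  · exact intervalIntegrable_div_ellipticDelta hw hm _ _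
  · exact (hw'.measurable.div
      ((continuous_ellipticDelta m).pow 3).measurable).aestronglyMeasurable
  · refine .of_forall fun θ _ x hx => ?_
    have hΔ := ellipticDelta_pos hq θ
    have hle := ellipticDelta_le_ellipticDelta (le_of_lt hx) θ
    rw [norm_div, norm_eq_abs, norm_of_nonneg (pow_nonneg (hΔ.le.trans hle) 3)]
    gcongr
  · exact intervalIntegrable_div_ellipticDelta_pow hw'.abs hq 3 _ _
  · refine .of_forall fun θ _ x hx => ?_
    have hx1 : x < 1 := lt_trans hx hq
    have hΔ := ellipticDelta_pos hx1 θ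
    refine ((hasDerivAt_const x (w θ)).div
      (hasDerivAt_ellipticDelta_left hx1 θ) hΔ.ne').congr_deriv ?_
    field_simp
    ring

lemma continuousWithinAt_ellipticInt_one (hw : Continuous w)
    (hle : ∀ θ ∈ Icc 0 (π / 2), |w θ| ≤ cos θ) :
    ContinuousWithinAt (ellipticInt w) (Iic 1) 1 := by
  refine continuousWithinAt_of_dominated_interval (bound := fun _ => 1) ?_ ?_
    intervalIntegrable_const ?_
  · exact .of_forall fun m =>
      (hw.measurable.div (continuous_ellipticDelta m).measurable).aestronglyMeasurable
  · filter_upwards [self_mem_nhdsWithin] with m hm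
    refine .of_forall fun θ hθ => ?_
    have hwΔ : |w θ| ≤ ellipticDelta m θ :=
      (hle θ (uIoc_subset_uIcc.trans (uIcc_of_le pi_div_two_pos.le).subset hθ)).trans
        (cos_le_ellipticDelta hm θ)
    rw [norm_div, norm_eq_abs, norm_of_nonneg ((abs_nonneg _).trans hwΔ)]
    exact div_le_one_of_le₀ hwΔ ((abs_nonneg _).trans hwΔ)
  · refine .of_forall fun θ hθ => ?_
    have hwcos := hle θ (uIoc_subset_uIcc.trans (uIcc_of_le pi_div_two_pos.le).subset hθ)
    rcases eq_or_ne (cos θ) 0 with hcos | hcos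
    · have hw0 : w θ = 0 := abs_nonpos_iff.1 (hcos ▸ hwcos)
      simpa only [hw0, zero_div] using continuousWithinAt_const
    · refine (continuousAt_const.div (continuous_ellipticDelta_left θ).continuousAt
        ?_).continuousWithinAt
      rwa [ellipticDelta_one, abs_ne_zero]

lemma ellipticInt_one (w : ℝ → ℝ) :
    ellipticInt w 1 = ∫ θ in (0:ℝ)..(π / 2), w θ / cos θ := by
  refine integral_congr fun θ hθ => ?_
  rw [uIcc_of_le pi_div_two_pos.le] at hθ
  have hcos : 0 ≤ cos θ := cos_nonneg_of_mem_Icc_zero_pi_div_two hθ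
  simp only [ellipticDelta_one, abs_of_nonneg hcos]

lemma integral_deriv_sin_mul_cos_div_ellipticDelta (hm : m < 1) :
    ∫ θ in (0:ℝ)..(π / 2),
      (cos θ ^ 2 - sin θ ^ 2 + m * sin θ ^ 4) / ellipticDelta m θ ^ 3 = 0 := by
  have hderiv (θ : ℝ) : HasDerivAt (fun θ => sin θ * cos θ / ellipticDelta m θ)
      ((cos θ ^ 2 - sin θ ^ 2 + m * sin θ ^ 4) / ellipticDelta m θ ^ 3) θ := by
    have hΔ := (ellipticDelta_pos hm θ).ne'
    refine (((hasDerivAt_sin θ).mul (hasDerivAt_cos θ)).div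
      (hasDerivAt_ellipticDelta hm θ) hΔ).congr_deriv ?_
    simp only [Pi.mul_apply]
    field_simp
    rw [ellipticDelta_sq hm]
    ring
  rw [integral_eq_sub_of_hasDerivAt (fun θ _ => hderiv θ)
    (intervalIntegrable_div_ellipticDelta_pow (by fun_prop) hm 3 _ _)]
  simp

lemma integral_div_ellipticDelta_pow_three_eq_ellipticInt {v : ℝ → ℝ} (c : ℝ) (hm : m < 1)
    (hw : Continuous w) (h : ∀ θ, v θ * (1 - m * sin θ ^ 2) =
      w θ + c * (cos θ ^ 2 - sin θ ^ 2 + m * sin θ ^ 4)) :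
    ∫ θ in (0:ℝ)..(π / 2), w θ / ellipticDelta m θ ^ 3 = ellipticInt v m := by
  have hsplit (θ : ℝ) : v θ / ellipticDelta m θ = w θ / ellipticDelta m θ ^ 3 +
      c * ((cos θ ^ 2 - sin θ ^ 2 + m * sin θ ^ 4) / ellipticDelta m θ ^ 3) := by
    have hΔ := (ellipticDelta_pos hm θ).ne'
    field_simp
    rw [ellipticDelta_sq hm, h]
    ring
  simp only [ellipticInt, hsplit]
  rw [integral_add (intervalIntegrable_div_ellipticDelta_pow hw hm 3 _ _)
      ((intervalIntegrable_div_ellipticDelta_pow (by fun_prop) hm 3 _ _).const_mul c),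
    intervalIntegral.integral_const_mul, integral_deriv_sin_mul_cos_div_ellipticDelta hm,
    mul_zero, add_zero]

end EllipticInt

section EllipticKB

variable {m : ℝ}

/-- The complete elliptic integral of the first kind as a function of the parameter `m = r²`. -/
noncomputable def ellipticK (m : ℝ) : ℝ := ellipticInt 1 m

/-- The associate complete elliptic integral `B = (E - (1 - m) K) / m = ∫₀^{π/2} cos² θ / Δ(θ) dθ`.
Unlike `E`, it makes both `K` and `m B` have one-term derivatives. -/
noncomputable def ellipticB (m : ℝ) : ℝ := ellipticInt (fun θ => cos θ ^ 2) m

lemma ellipticK_zero : ellipticK 0 = π / 2 := by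
  simp [ellipticK, ellipticInt, ellipticDelta_zero]

lemma ellipticK_pos (hm : m < 1) : 0 < ellipticK m :=
  intervalIntegral_pos_of_pos (intervalIntegrable_div_ellipticDelta continuous_const hm _ _)
    (fun θ => one_div_pos.2 (ellipticDelta_pos hm θ)) (by positivity)

lemma hasDerivAt_ellipticK (hm : m < 1) :
    HasDerivAt ellipticK (ellipticB m / (2 * (1 - m))) m := by
  refine (hasDerivAt_ellipticInt continuous_one hm).congr_deriv ?_
  rw [div_eq_inv_mul (ellipticB m), ellipticB, ← ellipticInt_const_mul]
  refine integral_div_ellipticDelta_pow_three_eq_ellipticInt (2 * (1 - m))⁻¹ hm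
    (by fun_prop) fun θ => ?_
  have hm0 : 1 - m ≠ 0 := (sub_pos.2 hm).ne'
  simp only [Pi.one_apply]
  field_simp
  rw [cos_sq']
  ring

lemma hasDerivAt_mul_ellipticB (hm : m < 1) :
    HasDerivAt (fun x => x * ellipticB x) (ellipticK m / 2) m := by
  have hcos : Continuous fun θ : ℝ => cos θ ^ 2 := by fun_prop
  have hint : m * ∫ θ in (0:ℝ)..(π / 2), cos θ ^ 2 * sin θ ^ 2 / 2 / ellipticDelta m θ ^ 3 =
      ellipticK m / 2 - ellipticB m := by
    have hKB : ellipticInt (fun θ => 1 / 2 * 1 + -1 * cos θ ^ 2) m =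
        ellipticK m / 2 - ellipticB m := by
      rw [ellipticInt_add (by fun_prop) (by fun_prop) hm, ellipticInt_const_mul,
        ellipticInt_const_mul, ellipticB, ellipticK, Pi.one_def]
      ring
    rw [← hKB, ← intervalIntegral.integral_const_mul]
    simp only [← mul_div_assoc m]
    refine integral_div_ellipticDelta_pow_three_eq_ellipticInt (-1 / 2) hm
      (by fun_prop) fun θ => ?_
    rw [cos_sq']
    ring
  refine ((hasDerivAt_id m).mul (hasDerivAt_ellipticInt hcos hm)).congr_deriv ?_
  rw [id, one_mul, hint]
  exact add_sub_cancel _ _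

lemma ellipticB_one : ellipticB 1 = 1 := by
  have hcos (θ : ℝ) : cos θ ^ 2 / cos θ = cos θ := by rw [sq, mul_self_div_self]
  simp [ellipticB, ellipticInt_one, hcos]

lemma ellipticB_le_one (hm : m < 1) : ellipticB m ≤ 1 := by
  have hcos : ∫ θ in (0:ℝ)..(π / 2), cos θ = 1 := by simp
  rw [← hcos]
  refine integral_mono_on pi_div_two_pos.le
    (intervalIntegrable_div_ellipticDelta (by fun_prop) hm _ _)
    (continuous_cos.intervalIntegrable _ _) fun θ hθ => ?_
  have hcos0 : 0 ≤ cos θ := cos_nonneg_of_mem_Icc_zero_pi_div_two hθ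
  rw [div_le_iff₀ (ellipticDelta_pos hm θ)]
  exact (sq (cos θ)).trans_le <| mul_le_mul_of_nonneg_left (cos_le_ellipticDelta hm.le θ) hcos0

lemma tendsto_ellipticB_nhdsLT_one : Tendsto ellipticB (𝓝[<] 1) (𝓝 1) := by
  have h : ContinuousWithinAt ellipticB (Iic 1) 1 := by
    refine continuousWithinAt_ellipticInt_one (by fun_prop) fun θ hθ => ?_
    have hcos : 0 ≤ cos θ := cos_nonneg_of_mem_Icc_zero_pi_div_two hθ
    rw [abs_of_nonneg (sq_nonneg _)]
    nlinarith [cos_le_one θ]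
  simpa only [ellipticB_one] using h.tendsto.mono_left (nhdsWithin_mono 1 Iio_subset_Iic_self)

lemma ellipticInt_one_sub_sin_one : ellipticInt (fun θ => 1 - sin θ) 1 = log 2 := by
  have hpos {θ : ℝ} (hθ : θ ∈ uIcc 0 (π / 2)) : 0 < 1 + sin θ := by
    rw [uIcc_of_le pi_div_two_pos.le] at hθ
    linarith [sin_nonneg_of_nonneg_of_le_pi hθ.1 (by linarith [hθ.2, pi_pos])]
  have hcongr : ellipticInt (fun θ => 1 - sin θ) 1 =
      ∫ θ in (0:ℝ)..(π / 2), cos θ / (1 + sin θ) := by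
    rw [ellipticInt_one]
    refine integral_congr fun θ hθ => ?_
    rcases eq_or_ne (cos θ) 0 with hcos | hcos
    · simp only [hcos, div_zero, zero_div]
    · rw [div_eq_div_iff hcos (hpos hθ).ne']
      linear_combination -sin_sq_add_cos_sq θ
  rw [hcongr, integral_eq_sub_of_hasDerivAt (f := fun θ => log (1 + sin θ))
    (fun θ hθ => ((hasDerivAt_sin θ).const_add 1).log (hpos hθ).ne')]
  · norm_num
  · exact (continuousOn_cos.div (by fun_prop) fun θ hθ => (hpos hθ).ne').intervalIntegrable

lemma tendsto_ellipticInt_one_sub_sin_nhdsLT_one :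
    Tendsto (ellipticInt fun θ => 1 - sin θ) (𝓝[<] 1) (𝓝 (log 2)) := by
  have h : ContinuousWithinAt (ellipticInt fun θ => 1 - sin θ) (Iic 1) 1 := by
    refine continuousWithinAt_ellipticInt_one (by fun_prop) fun θ hθ => ?_
    have hsin : 0 ≤ sin θ := sin_nonneg_of_nonneg_of_le_pi hθ.1 (by linarith [hθ.2, pi_pos])
    have hcos : 0 ≤ cos θ := cos_nonneg_of_mem_Icc_zero_pi_div_two hθ
    rw [abs_of_nonneg (sub_nonneg.2 (sin_le_one θ))]
    nlinarith [sin_sq_add_cos_sq θ, mul_nonneg hsin hcos]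
  simpa only [ellipticInt_one_sub_sin_one] using
    h.tendsto.mono_left (nhdsWithin_mono 1 Iio_subset_Iic_self)

lemma ellipticInt_sin (hm : m ∈ Ioo 0 1) :
    ellipticInt sin m = (log (1 + √m) - log (1 - m) / 2) / √m := by
  have hb : 0 < √m := sqrt_pos.2 hm.1
  have hderiv : ∀ θ ∈ uIcc 0 (π / 2), HasDerivAt
      (fun θ => -(log (√m * cos θ + ellipticDelta m θ) / √m)) (sin θ / ellipticDelta m θ) θ := by
    intro θ hθ
    rw [uIcc_of_le pi_div_two_pos.le] at hθ
    have hcos : 0 ≤ cos θ := cos_nonneg_of_mem_Icc_zero_pi_div_two hθ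
    have hΔ := ellipticDelta_pos hm.2 θ
    have hsum : 0 < √m * cos θ + ellipticDelta m θ := by positivity
    refine (((((hasDerivAt_cos θ).const_mul √m).add
      (hasDerivAt_ellipticDelta hm.2 θ)).log hsum.ne').div_const √m).neg.congr_deriv ?_
    simp only [Pi.add_apply]
    field_simp
    rw [← sq_sqrt hm.1.le, sqrt_sq hb.le]
    ring
  rw [ellipticInt, integral_eq_sub_of_hasDerivAt hderiv
    (intervalIntegrable_div_ellipticDelta continuous_sin hm.2 _ _)]
  simp only [ellipticDelta, cos_pi_div_two, sin_pi_div_two, cos_zero, sin_zero, one_pow, mul_one,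
    mul_zero, zero_add, sub_zero, ne_eq, OfNat.ofNat_ne_zero, not_false_eq_true, zero_pow,
    sqrt_one, log_sqrt (sub_pos.2 hm.2).le]
  ring_nf

lemma tendsto_mul_log_one_sub_nhdsLT_one {g : ℝ → ℝ} {g' : ℝ} (hg : HasDerivAt g g' 1)
    (hg1 : g 1 = 0) : Tendsto (fun m => g m * log (1 - m)) (𝓝[<] 1) (𝓝 0) := by
  have h := (tendsto_mul_log_sub_of_hasDerivAt hg hg1).mono_left (nhdsLT_le_nhdsNE 1)
  simpa only [← log_neg_eq_log (_ - 1), neg_sub] using h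

/- Write `1 = (1 - sin θ) + sin θ`: the first weight tames the singularity at `m = 1`, and the
second integral is elementary. -/
lemma tendsto_ellipticK_add_log_nhdsLT_one :
    Tendsto (fun m => ellipticK m + log (1 - m) / 2) (𝓝[<] 1) (𝓝 (log 4)) := by
  have hlog : Tendsto (fun m : ℝ => log (1 + √m) / √m) (𝓝[<] 1) (𝓝 (log 2)) := by
    have h : ContinuousAt (fun m : ℝ => log (1 + √m) / √m) 1 :=
      ((continuousAt_const.add continuous_sqrt.continuousAt).log (by norm_num)).div
        continuous_sqrt.continuousAt (by simp)
    convert h.tendsto.mono_left nhdsWithin_le_nhds using 2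
    norm_num
  have hinv : HasDerivAt (fun m : ℝ => (1 - (√m)⁻¹) / 2) (1 / 4) 1 := by
    refine ((((hasDerivAt_sqrt one_ne_zero).inv (by simp)).const_sub 1).div_const 2).congr_deriv ?_
    norm_num
  have hlog4 : log 4 = log 2 + log 2 + 0 := by
    rw [add_zero, ← log_mul two_ne_zero two_ne_zero]
    norm_num
  rw [hlog4]
  refine ((tendsto_ellipticInt_one_sub_sin_nhdsLT_one.add hlog).add
    (tendsto_mul_log_one_sub_nhdsLT_one hinv (by simp))).congr' ?_
  filter_upwards [Ioo_mem_nhdsLT zero_lt_one] with m hm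
  have hsplit : ellipticK m = ellipticInt (fun θ => 1 - sin θ) m + ellipticInt sin m := by
    rw [← ellipticInt_add (by fun_prop) continuous_sin hm.2]
    simp only [sub_add_cancel]
    rfl
  rw [hsplit, ellipticInt_sin hm]
  have := sqrt_pos.2 hm.1
  field_simp
  ring

lemma tendsto_mul_ellipticK_nhdsLT_one {g : ℝ → ℝ} {g' : ℝ} (hg : HasDerivAt g g' 1)
    (hg1 : g 1 = 0) : Tendsto (fun m => g m * ellipticK m) (𝓝[<] 1) (𝓝 0) := by
  have hg0 : Tendsto g (𝓝[<] 1) (𝓝 0) :=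
    hg1 ▸ hg.continuousAt.tendsto.mono_left nhdsWithin_le_nhds
  have h := (hg0.mul tendsto_ellipticK_add_log_nhdsLT_one).sub
    ((tendsto_mul_log_one_sub_nhdsLT_one hg hg1).div_const 2)
  rw [zero_mul, zero_div, sub_zero] at h
  exact h.congr fun m => by ring

lemma tendsto_ellipticK_nhdsLT_one : Tendsto ellipticK (𝓝[<] 1) atTop := by
  have h := tendsto_ellipticK_add_log_nhdsLT_one.add_atTop
    (tendsto_neg_atBot_atTop.comp
      ((tendsto_log_nhdsGT_zero.comp tendsto_one_sub_nhdsLT_one).atBot_div_const two_pos))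
  exact h.congr fun m => add_neg_cancel_right _ _

lemma ellipticK_one_sub_pow_four_le {a : ℝ} (ha : 0 < a) :
    ellipticK (1 - a ^ 4) ≤ π / (2 * a) := by
  have hm : 1 - a ^ 4 < 1 := sub_lt_self 1 (by positivity)
  have hpos (θ : ℝ) := cos_sq_add_mul_sin_sq_pos (pow_pos ha 2) θ
  rw [← integral_inv_cos_sq_add_sq_mul_sin_sq ha]
  refine integral_mono_on pi_div_two_pos.le
    (intervalIntegrable_div_ellipticDelta continuous_one hm _ _)
    ((Continuous.inv₀ (by fun_prop) fun θ => (hpos θ).ne').intervalIntegrable _ _) fun θ _ => ?_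
  rw [Pi.one_apply, one_div]
  exact inv_anti₀ (hpos θ) (cos_sq_add_sq_mul_sin_sq_le_ellipticDelta a θ)

/- `π / (2 K(1 - m))` is the arithmetic-geometric mean of `1` and `√m`, so it is at least their
geometric mean. -/
lemma sqrt_le_sq_pi_div_ellipticK_one_sub (hm : 0 < m) :
    √m ≤ (π / (2 * ellipticK (1 - m))) ^ 2 := by
  have ha : 0 < √√m := by positivity
  have ha4 : √√m ^ 4 = m := by
    rw [pow_mul _ 2 2, sq_sqrt (sqrt_nonneg m), sq_sqrt hm.le]
  have hK := ellipticK_one_sub_pow_four_le ha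
  rw [ha4] at hK
  have hKpos : 0 < ellipticK (1 - m) := ellipticK_pos (sub_lt_self 1 hm)
  calc √m = √√m ^ 2 := (sq_sqrt (sqrt_nonneg m)).symm
    _ ≤ (π / (2 * ellipticK (1 - m))) ^ 2 := by
      gcongr
      rw [le_div_iff₀ (by positivity)] at hK ⊢
      linarith

lemma hasDerivAt_ellipticK_one_sub (hm : 0 < m) :
    HasDerivAt (fun x => ellipticK (1 - x)) (-(ellipticB (1 - m) / (2 * m))) m := by
  simpa using (hasDerivAt_ellipticK (sub_lt_self 1 hm)).comp_const_sub 1 m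

lemma hasDerivAt_one_sub_mul_ellipticB_one_sub (hm : 0 < m) :
    HasDerivAt (fun x => (1 - x) * ellipticB (1 - x)) (-(ellipticK (1 - m) / 2)) m :=
  (hasDerivAt_mul_ellipticB (sub_lt_self 1 hm)).comp_const_sub 1 m

/-- The left-hand side of Legendre's relation `E K' + E' K - K K' = π / 2`, expressed through the
integrals `B`. -/
noncomputable def legendreForm (m : ℝ) : ℝ :=
  m * ellipticB m * ellipticK (1 - m) + (1 - m) * ellipticB (1 - m) * ellipticK m

lemma hasDerivAt_legendreForm (hm : m ∈ Ioo 0 1) : HasDerivAt legendreForm 0 m := by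
  refine (((hasDerivAt_mul_ellipticB hm.2).mul (hasDerivAt_ellipticK_one_sub hm.1)).add
    ((hasDerivAt_one_sub_mul_ellipticB_one_sub hm.1).mul
      (hasDerivAt_ellipticK hm.2))).congr_deriv ?_
  have hm0 := hm.1.ne'
  have hm1 : 1 - m ≠ 0 := (sub_pos.2 hm.2).ne'
  field_simp
  ring

lemma tendsto_legendreForm_nhdsLT_one : Tendsto legendreForm (𝓝[<] 1) (𝓝 (π / 2)) := by
  have hid : Tendsto (fun m : ℝ => m) (𝓝[<] 1) (𝓝 1) := nhdsWithin_le_nhds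
  have hB : ContinuousAt ellipticB 0 :=
    (hasDerivAt_ellipticInt (by fun_prop) zero_lt_one).continuousAt
  have hK : ContinuousAt ellipticK 0 := (hasDerivAt_ellipticK zero_lt_one).continuousAt
  have hsub : Tendsto (fun m : ℝ => 1 - m) (𝓝[<] 1) (𝓝 0) :=
    tendsto_one_sub_nhdsLT_one.mono_right nhdsWithin_le_nhds
  have hsing : Tendsto (fun m => (1 - m) * ellipticK m) (𝓝[<] 1) (𝓝 0) :=
    tendsto_mul_ellipticK_nhdsLT_one ((hasDerivAt_id 1).const_sub 1) (sub_self 1)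
  have h := ((hid.mul tendsto_ellipticB_nhdsLT_one).mul (hK.tendsto.comp hsub)).add
    (hsing.mul (hB.tendsto.comp hsub))
  rw [ellipticK_zero, one_mul, one_mul, zero_mul, add_zero] at h
  exact h.congr fun m => by simp only [legendreForm, Function.comp_apply]; ring

lemma legendreForm_eq_pi_div_two (hm : m ∈ Ioo 0 1) : legendreForm m = π / 2 := by
  have hconst : ∀ x ∈ Ioo (0:ℝ) 1, legendreForm x = legendreForm m := fun x hx =>
    isOpen_Ioo.is_const_of_deriv_eq_zero isPreconnected_Ioo
      (fun y hy => (hasDerivAt_legendreForm hy).differentiableAt.differentiableWithinAt)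
      (fun y hy => (hasDerivAt_legendreForm hy).deriv) hx hm
  refine tendsto_nhds_unique (tendsto_const_nhds.congr' ?_) tendsto_legendreForm_nhdsLT_one
  filter_upwards [Ioo_mem_nhdsLT zero_lt_one] with x hx
  exact (hconst x hx).symm

end EllipticKB

section GrotzschF

variable {m : ℝ}

/-- The function `(2/π) K K' + log r - μ(r')` of the theorem, as a function of `m = r²`. -/
noncomputable def grotzschF (m : ℝ) : ℝ :=
  2 / π * ellipticK m * ellipticK (1 - m) + log m / 2 - π / 2 * ellipticK m / ellipticK (1 - m)

lemma hasDerivAt_grotzschF (hm : m ∈ Ioo 0 1) :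
    HasDerivAt grotzschF ((2 / π * ellipticB m * ellipticK (1 - m) -
      (1 + (π / (2 * ellipticK (1 - m))) ^ 2 / m) / 2) / (1 - m)) m := by
  have hK' : 0 < ellipticK (1 - m) := ellipticK_pos (sub_lt_self 1 hm.1)
  have hm0 := hm.1.ne'
  have hm1 : 1 - m ≠ 0 := (sub_pos.2 hm.2).ne'
  have hdK := hasDerivAt_ellipticK hm.2
  have hdK' := hasDerivAt_ellipticK_one_sub hm.1
  refine ((((hdK.const_mul (2 / π)).mul hdK').add ((hasDerivAt_log hm0).div_const 2)).sub
    ((hdK.const_mul (π / 2)).div hdK' hK'.ne')).congr_deriv ?_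
  have hL : m * ellipticB m * ellipticK (1 - m) + (1 - m) * ellipticB (1 - m) * ellipticK m =
      π / 2 := legendreForm_eq_pi_div_two hm
  field_simp at hL ⊢
  linear_combination (-(4 * ellipticK (1 - m) ^ 2 + π ^ 2)) * hL

lemma two_mul_lt_mul_add_sq {M : ℝ} (hm : m ∈ Ioo 0 1) (hM : 0 < M) (hmM : √m ≤ M ^ 2) :
    2 * m < M * (m + M ^ 2) := by
  have hs : √m ^ 2 = m := sq_sqrt hm.1.le
  have hs1 : √m < 1 := by
    rw [sqrt_lt' one_pos, one_pow]
    exact hm.2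
  have hsM : √m < M := by
    nlinarith [sqrt_pos.2 hm.1]
  calc 2 * m = 2 * √m * √m := by rw [mul_assoc, ← sq, hs]
    _ ≤ 2 * √m * M ^ 2 := by gcongr
    _ = M * (2 * √m * M) := by ring
    _ < M * (m + M ^ 2) := by
      gcongr
      nlinarith [sq_pos_of_pos (sub_pos.2 hsM)]

lemma strictAntiOn_grotzschF : StrictAntiOn grotzschF (Ioo 0 1) := by
  refine strictAntiOn_of_deriv_neg (convex_Ioo 0 1)
    (fun m hm => (hasDerivAt_grotzschF hm).continuousAt.continuousWithinAt) fun m hm => ?_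
  rw [interior_Ioo] at hm
  rw [(hasDerivAt_grotzschF hm).deriv]
  refine div_neg_of_neg_of_pos (sub_neg.2 ?_) (sub_pos.2 hm.2)
  have hK' : 0 < ellipticK (1 - m) := ellipticK_pos (sub_lt_self 1 hm.1)
  obtain ⟨M, hMdef⟩ : ∃ M, M = π / (2 * ellipticK (1 - m)) := ⟨_, rfl⟩
  have hM : 0 < M := by rw [hMdef]; positivity
  have hmain := two_mul_lt_mul_add_sq hm hM
    (hMdef ▸ sqrt_le_sq_pi_div_ellipticK_one_sub hm.1)
  have hm0 := hm.1
  calc 2 / π * ellipticB m * ellipticK (1 - m) ≤ 2 / π * 1 * ellipticK (1 - m) := by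
        gcongr
        exact ellipticB_le_one hm.2
    _ = 1 / M := by rw [hMdef]; field_simp
    _ < (1 + M ^ 2 / m) / 2 := by
      rw [div_lt_iff₀ hM]
      field_simp
      linarith
    _ = (1 + (π / (2 * ellipticK (1 - m))) ^ 2 / m) / 2 := by rw [hMdef]

lemma tendsto_mul_ellipticK_one_sub_nhdsGT_zero {g : ℝ → ℝ} {g' : ℝ} (hg : HasDerivAt g g' 0)
    (hg0 : g 0 = 0) : Tendsto (fun m => g m * ellipticK (1 - m)) (𝓝[>] 0) (𝓝 0) := by
  have hg1 : HasDerivAt (fun m => g (1 - m)) (-g') 1 :=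
    HasDerivAt.comp_const_sub 1 1 (by simpa using hg)
  refine ((tendsto_mul_ellipticK_nhdsLT_one hg1 (by simpa using hg0)).comp
    tendsto_one_sub_nhdsGT_zero).congr fun m => ?_
  simp only [Function.comp_apply, sub_sub_cancel]

lemma tendsto_grotzschF_nhdsGT_zero : Tendsto grotzschF (𝓝[>] 0) (𝓝 (log 4)) := by
  have hdK := hasDerivAt_ellipticK zero_lt_one
  have hmain := tendsto_ellipticK_add_log_nhdsLT_one.comp tendsto_one_sub_nhdsGT_zero
  have hsmall : Tendsto (fun m => 2 / π * (ellipticK m - π / 2) * ellipticK (1 - m))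
      (𝓝[>] 0) (𝓝 0) :=
    tendsto_mul_ellipticK_one_sub_nhdsGT_zero ((hdK.sub_const _).const_mul _)
      (by rw [ellipticK_zero, sub_self, mul_zero])
  have hquot : Tendsto (fun m => π / 2 * ellipticK m / ellipticK (1 - m)) (𝓝[>] 0) (𝓝 0) :=
    ((hdK.continuousAt.tendsto.mono_left nhdsWithin_le_nhds).const_mul _).div_atTop
      (tendsto_ellipticK_nhdsLT_one.comp tendsto_one_sub_nhdsGT_zero)
  have h := (hmain.add hsmall).sub hquot
  rw [add_zero, sub_zero] at h
  refine h.congr fun m => ?_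
  simp only [grotzschF, Function.comp_apply, sub_sub_cancel]
  field_simp
  ring

lemma tendsto_grotzschF_nhdsLT_one : Tendsto grotzschF (𝓝[<] 1) (𝓝 0) := by
  have hdK' := hasDerivAt_ellipticK_one_sub one_pos
  have hK'1 : ellipticK (1 - 1) = π / 2 := by rw [sub_self, ellipticK_zero]
  have hprod : Tendsto (fun m => (2 / π * ellipticK (1 - m) - π / 2 / ellipticK (1 - m)) *
      ellipticK m) (𝓝[<] 1) (𝓝 0) := by
    refine tendsto_mul_ellipticK_nhdsLT_one ((hdK'.const_mul (2 / π)).sub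
      ((hasDerivAt_const 1 (π / 2)).div hdK' (ellipticK_pos (by simp)).ne')) ?_
    simp only [hK'1]
    field_simp
    norm_num
  have hlog : Tendsto (fun m => log m / 2) (𝓝[<] 1) (𝓝 0) := by
    have h := (continuousAt_log one_ne_zero).tendsto.div_const 2
    rw [log_one, zero_div] at h
    exact h.mono_left nhdsWithin_le_nhds
  have h := hprod.add hlog
  rw [add_zero] at h
  exact h.congr fun m => by rw [grotzschF]; ring

lemma ellK_eq_ellipticK_sq {r : ℝ} (hr : r ^ 2 ≤ 1) : ellK r = ellipticK (r ^ 2) := by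
  refine integral_congr fun θ _ => ?_
  have hnonneg : 0 ≤ 1 - r ^ 2 * sin θ ^ 2 := by
    nlinarith [sin_sq_le_one θ, sq_nonneg (sin θ)]
  simp only [ellipticDelta, Pi.one_apply, sqrt_eq_rpow, rpow_neg hnonneg, one_div]

lemma grotzschF_sq {r : ℝ} (hr : r ∈ Ioo 0 1) :
    grotzschF (r ^ 2) =
      2 / π * ellK r * ellK (√(1 - r ^ 2)) + log r - mu (√(1 - r ^ 2)) := by
  have hr1 : r ^ 2 ≤ 1 := pow_le_one₀ hr.1.le hr.2.le
  have hsq : √(1 - r ^ 2) ^ 2 = 1 - r ^ 2 := sq_sqrt (sub_nonneg.2 hr1)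
  have hr' : √(1 - r ^ 2) ^ 2 ≤ 1 := hsq.trans_le (sub_le_self 1 (sq_nonneg r))
  rw [mu, hsq, sub_sub_cancel, sqrt_sq hr.1.le, ellK_eq_ellipticK_sq hr1,
    ellK_eq_ellipticK_sq hr', hsq, grotzschF, log_pow]
  push_cast
  ring

lemma mapsTo_sq_Ioo : MapsTo (fun r : ℝ => r ^ 2) (Ioo 0 1) (Ioo 0 1) := fun _ hr =>
  ⟨pow_pos hr.1 2, pow_lt_one₀ hr.1.le hr.2 two_ne_zero⟩

end GrotzschF

theorem stmt_2 (f : ℝ → ℝ)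
    (hf : f = fun r : ℝ => 2 / Real.pi * ellK r * ellK (Real.sqrt (1 - r ^ 2)) +
      Real.log r - mu (Real.sqrt (1 - r ^ 2))) :
    StrictAntiOn f (Set.Ioo 0 1) ∧
    Filter.Tendsto f (nhdsWithin 0 (Set.Ioi 0)) (nhds (Real.log 4)) ∧
    Filter.Tendsto f (nhdsWithin 1 (Set.Iio 1)) (nhds 0) ∧
    f '' Set.Ioo 0 1 = Set.Ioo 0 (Real.log 4) := by
  have hF : EqOn (grotzschF ∘ (· ^ 2)) f (Ioo 0 1) := fun r hr => hf ▸ grotzschF_sq hr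
  have hsq (a : ℝ) : ContinuousWithinAt (fun r : ℝ => r ^ 2) (Ioo 0 1) a := by fun_prop
  have hanti : StrictAntiOn f (Ioo 0 1) :=
    (strictAntiOn_grotzschF.comp_strictMonoOn
      ((pow_left_strictMonoOn₀ two_ne_zero).mono fun r hr => hr.1.le) mapsTo_sq_Ioo).congr hF
  have hcont : ContinuousOn f (Ioo 0 1) :=
    (ContinuousOn.comp (fun m hm => (hasDerivAt_grotzschF hm).continuousAt.continuousWithinAt)
      (fun r _ => hsq r) mapsTo_sq_Ioo).congr hF.symm
  have hzero : Tendsto f (𝓝[>] 0) (𝓝 (log 4)) := by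
    have hF0 := tendsto_grotzschF_nhdsGT_zero
    rw [← nhdsWithin_Ioo_eq_nhdsGT zero_lt_one] at hF0 ⊢
    exact tendsto_nhdsWithin_congr hF
      (hF0.comp (by simpa using (hsq 0).tendsto_nhdsWithin mapsTo_sq_Ioo))
  have hone : Tendsto f (𝓝[<] 1) (𝓝 0) := by
    have hF1 := tendsto_grotzschF_nhdsLT_one
    rw [← nhdsWithin_Ioo_eq_nhdsLT zero_lt_one] at hF1 ⊢
    exact tendsto_nhdsWithin_congr hF
      (hF1.comp (by simpa using (hsq 1).tendsto_nhdsWithin mapsTo_sq_Ioo))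
  exact ⟨hanti, hzero, hone,
    image_Ioo_of_strictAntiOn_of_tendsto zero_lt_one hanti hcont hzero hone⟩
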